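/- Define Ψ₁₀ : [0,π] → ℝ by Ψ₁₀(x) := −(16/π) Σ_{j=0}^∞ cos((2j+1)x)/((2j+1)² − 4)². Then the series converges, Ψ₁₀ is twice continuously differentiable on [0,π], Ψ₁₀'(0) = Ψ₁₀'(π) = 0, ∫₀^π Ψ₁₀(x) cos(2x) dx = 0, and Ψ₁₀''(x) + 4Ψ₁₀(x) + 2 sin(2x) = 0 for all x ∈ (0,π). -/

import Mathlib

open Set Real

noncomputable section

/-- `Ψ₁₀(x) = −(16/π) Σ_{j=0}^∞ cos((2j+1)x)/((2j+1)² − 4)²`. -/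
def Psi10 (x : ℝ) : ℝ :=
  -(16/π) * ∑' j : ℕ, Real.cos ((2 * (j:ℝ) + 1) * x) / ((2 * (j:ℝ) + 1)^2 - 4)^2


/-- The odd frequencies. -/
def wq (j : ℕ) : ℝ := 2 * (j:ℝ) + 1

lemma wq_ge (j : ℕ) : 1 ≤ wq j := by
  have : (0:ℝ) ≤ j := Nat.cast_nonneg j
  unfold wq; linarith

lemma wq_abs (j : ℕ) : wq j ^ 2 / 3 ≤ |wq j ^ 2 - 4| := by
  rcases Nat.eq_zero_or_pos j with h | h
  · subst h; norm_num [wq]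
  · have : (1:ℝ) ≤ j := by exact_mod_cast h
    rw [abs_of_nonneg] <;> unfold wq <;> nlinarith

lemma wq_ne (j : ℕ) : wq j ^ 2 - 4 ≠ 0 := by
  have h := wq_abs j
  have h1 := wq_ge j
  intro h0
  rw [h0, abs_zero] at h
  nlinarith

lemma summable_inv_wq : Summable (fun j : ℕ => 1 / wq j ^ 2) := by
  have h : Summable (fun n : ℕ => 1 / (n:ℝ) ^ 2) := Real.summable_one_div_nat_pow.2 (by norm_num)
  have hi : Function.Injective (fun j : ℕ => 2 * j + 1) := by
    intro a b hab; simp only at hab; omega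
  have := h.comp_injective hi
  refine this.congr ?_
  intro j; simp [wq]

lemma series_facts (c : ℕ → ℝ) (hc : Summable (fun j => |c j| * wq j ^ 2)) :
    (∀ x, Summable (fun j => c j * Real.cos (wq j * x))) ∧
    (∀ x, HasDerivAt (fun x => ∑' j, c j * Real.cos (wq j * x))
      (∑' j, -(c j * wq j) * Real.sin (wq j * x)) x) ∧
    (∀ x, HasDerivAt (fun x => ∑' j, -(c j * wq j) * Real.sin (wq j * x))
      (∑' j, -(c j * wq j ^ 2) * Real.cos (wq j * x)) x) ∧
    Continuous (fun x => ∑' j, -(c j * wq j ^ 2) * Real.cos (wq j * x)) := by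
  have b0 : ∀ j x, ‖c j * Real.cos (wq j * x)‖ ≤ |c j| * wq j ^ 2 := by
    intro j x
    have := wq_ge j
    rw [norm_mul, Real.norm_eq_abs, Real.norm_eq_abs]
    gcongr
    exact (Real.abs_cos_le_one _).trans (by nlinarith)
  have b1 : ∀ j x, ‖-(c j * wq j) * Real.sin (wq j * x)‖ ≤ |c j| * wq j ^ 2 := by
    intro j x
    have h := wq_ge j
    rw [norm_mul, Real.norm_eq_abs, Real.norm_eq_abs, abs_neg, abs_mul,
      abs_of_nonneg (by linarith : 0 ≤ wq j), mul_assoc]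
    gcongr
    have := Real.abs_sin_le_one (wq j * x)
    have := abs_nonneg (Real.sin (wq j * x))
    nlinarith
  have b2 : ∀ j x, ‖-(c j * wq j ^ 2) * Real.cos (wq j * x)‖ ≤ |c j| * wq j ^ 2 := by
    intro j x
    have h := wq_ge j
    rw [norm_mul, Real.norm_eq_abs, Real.norm_eq_abs, abs_neg, abs_mul,
      abs_of_nonneg (by positivity : 0 ≤ wq j ^ 2)]
    exact mul_le_of_le_one_right (by positivity) (Real.abs_cos_le_one _)
  have s0 : ∀ x, Summable (fun j => c j * Real.cos (wq j * x)) :=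
    fun x => Summable.of_norm_bounded hc (fun j => b0 j x)
  have s1 : ∀ x, Summable (fun j => -(c j * wq j) * Real.sin (wq j * x)) :=
    fun x => Summable.of_norm_bounded hc (fun j => b1 j x)
  refine ⟨s0, ?_, ?_, ?_⟩
  · intro x
    refine hasDerivAt_tsum (g := fun j x => c j * Real.cos (wq j * x)) hc ?_ b1 (s0 0) x
    intro j y
    have := (((hasDerivAt_id y).const_mul (wq j)).cos).const_mul (c j)
    refine HasDerivAt.congr_deriv this ?_
    simp only [id]; ring
  · intro x
    refine hasDerivAt_tsum (g := fun j x => -(c j * wq j) * Real.sin (wq j * x)) hc ?_ b2 (s1 0) x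
    intro j y
    have := (((hasDerivAt_id y).const_mul (wq j)).sin).const_mul (-(c j * wq j))
    refine HasDerivAt.congr_deriv this ?_
    simp only [id]; ring
  · refine continuous_tsum (fun j => by fun_prop) hc b2

lemma bern2 (x : ℝ) : (Polynomial.map (algebraMap ℚ ℝ) (Polynomial.bernoulli (2 * 1))).eval x
    = x ^ 2 - x + 1 / 6 := by
  simp [Polynomial.bernoulli, Finset.sum_range_succ, Polynomial.eval_monomial]
  ring

lemma hasSum_F {t : ℝ} (h0 : 0 ≤ t) (h1 : t ≤ 2 * π) :
    HasSum (fun n : ℕ => 1 / (n:ℝ) ^ 2 * Real.cos (n * t)) (t ^ 2 / 4 - π * t / 2 + π ^ 2 / 6) := by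
  have hp := Real.pi_pos
  have := hasSum_one_div_nat_pow_mul_cos (k := 1) one_ne_zero (x := t / (2 * π))
    ⟨by positivity, by rw [div_le_one (by positivity)]; exact h1⟩
  rw [bern2] at this
  convert! this using 1
  · funext n
    congr 2
    field_simp
  · simp
    field_simp
    ring

lemma hasSum_of_eq {f g : ℕ → ℝ} {a : ℝ} (h : ∀ n, f n = g n) (hg : HasSum g a) :
    HasSum f a := by
  rw [funext h]; exact hg

lemma odd_sum {t : ℝ} (h0 : 0 ≤ t) (h1 : t ≤ π) :
    HasSum (fun j : ℕ => 1 / wq j ^ 2 * Real.cos (wq j * t)) (π ^ 2 / 8 - π * t / 4) := by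
  have hF := hasSum_F h0 (by linarith [Real.pi_pos])
  have hE := (hasSum_F (t := 2 * t) (by linarith) (by linarith)).mul_left (1 / 4)
  have hs : Summable (fun j : ℕ => 1 / wq j ^ 2 * Real.cos (wq j * t)) := by
    refine Summable.of_norm_bounded summable_inv_wq (fun j => ?_)
    rw [norm_mul, Real.norm_eq_abs, Real.norm_eq_abs, abs_of_nonneg (by positivity)]
    exact mul_le_of_le_one_right (by positivity) (Real.abs_cos_le_one _)
  obtain ⟨f, hf⟩ : ∃ f : ℕ → ℝ, ∀ n : ℕ, f n = 1 / (n:ℝ) ^ 2 * Real.cos (n * t) :=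
    ⟨_, fun _ => rfl⟩
  have hF' : HasSum f (t ^ 2 / 4 - π * t / 2 + π ^ 2 / 6) :=
    hasSum_of_eq hf hF
  have hE' : HasSum (fun k : ℕ => f (2 * k))
      (1 / 4 * ((2 * t) ^ 2 / 4 - π * (2 * t) / 2 + π ^ 2 / 6)) := by
    refine hasSum_of_eq (fun k => ?_) hE
    rw [hf]
    push_cast
    rw [show (2 * (k:ℝ)) * t = k * (2 * t) by ring, mul_pow, one_div_mul_eq_div, one_div_mul_eq_div,
      one_div_mul_eq_div, div_div]
    congr 1
    ring
  have hO' : HasSum (fun k : ℕ => f (2 * k + 1))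
      (∑' j : ℕ, 1 / wq j ^ 2 * Real.cos (wq j * t)) := by
    refine hasSum_of_eq (fun k => ?_) hs.hasSum
    rw [hf]
    simp [wq]
  have := (hE'.even_add_odd hO').unique hF'
  have h2 : ∑' j : ℕ, 1 / wq j ^ 2 * Real.cos (wq j * t) = π ^ 2 / 8 - π * t / 4 := by
    linarith
  rw [← h2]
  exact hs.hasSum

lemma c1_summable : Summable (fun j => |1 / (wq j ^ 2 * (wq j ^ 2 - 4))| * wq j ^ 2) := by
  refine Summable.of_nonneg_of_le (fun j => by positivity) (fun j => ?_)
    (summable_inv_wq.mul_left 3)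
  have h := wq_abs j
  have h1 := wq_ge j
  have hpos : 0 < wq j ^ 2 := by positivity
  have h3 : 0 < |wq j ^ 2 - 4| := by linarith [div_pos hpos three_pos]
  rw [abs_div, abs_mul, abs_one, abs_of_pos hpos]
  have : 1 / (wq j ^ 2 * |wq j ^ 2 - 4|) * wq j ^ 2 = 1 / |wq j ^ 2 - 4| := by
    field_simp
  rw [this, mul_one_div, div_le_div_iff₀ h3 hpos]
  linarith

lemma c2_summable : Summable (fun j => |1 / (wq j ^ 2 - 4) ^ 2| * wq j ^ 2) := by
  refine Summable.of_nonneg_of_le (fun j => by positivity) (fun j => ?_)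
    (summable_inv_wq.mul_left 9)
  have h := wq_abs j
  have h1 := wq_ge j
  have hpos : 0 < wq j ^ 2 := by positivity
  have h3 : 0 < |wq j ^ 2 - 4| := by linarith [div_pos hpos three_pos]
  rw [abs_div, abs_pow, abs_one, mul_one_div, div_mul_eq_mul_div, one_mul,
    div_le_div_iff₀ (by positivity) hpos]
  nlinarith

lemma g_eq {x : ℝ} (hx : x ∈ Icc 0 π) :
    ∑' j, 1 / (wq j ^ 2 - 4) * Real.cos (wq j * x) = -(π / 8) * Real.sin (2 * x) := by
  obtain ⟨hs, hd1, hd2, -⟩ := series_facts _ c1_summable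
  set S : ℝ → ℝ := fun x => ∑' j, 1 / (wq j ^ 2 * (wq j ^ 2 - 4)) * Real.cos (wq j * x) with hS
  set S1 : ℝ → ℝ := fun x => ∑' j, -(1 / (wq j ^ 2 * (wq j ^ 2 - 4)) * wq j) *
    Real.sin (wq j * x) with hS1
  set g : ℝ → ℝ := fun x => ∑' j, 1 / (wq j ^ 2 - 4) * Real.cos (wq j * x) with hg
  have hneg : ∀ x, ∑' j, -(1 / (wq j ^ 2 * (wq j ^ 2 - 4)) * wq j ^ 2) * Real.cos (wq j * x)
      = - g x := by
    intro x
    rw [hg, ← tsum_neg]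
    refine tsum_congr fun j => ?_
    have h1 := wq_ne j
    have h2 : wq j ≠ 0 := by linarith [wq_ge j]
    field_simp
  have hgS : ∀ x ∈ Icc 0 π, g x = 4 * S x + (π ^ 2 / 8 - π * x / 4) := by
    intro x hx
    have := ((hs x).hasSum.mul_left 4).add (odd_sum hx.1 hx.2)
    rw [hS, ← this.tsum_eq, hg]
    refine tsum_congr fun j => ?_
    have h1 := wq_ne j
    have h2 : wq j ≠ 0 := by linarith [wq_ge j]
    field_simp
    ring
  have hG : ∀ x, HasDerivAt (fun x => 4 * S x + (π ^ 2 / 8 - π * x / 4)) (4 * S1 x - π / 4) x := by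
    intro x
    have h := ((hd1 x).const_mul 4).add
      ((hasDerivAt_const x (π ^ 2 / 8)).sub (((hasDerivAt_id x).const_mul π).div_const 4))
    refine HasDerivAt.congr_deriv h ?_
    ring
  have hG1 : ∀ x, HasDerivAt (fun x => 4 * S1 x - π / 4) (-4 * g x) x := by
    intro x
    have h := ((hd2 x).const_mul 4).sub_const (π / 4)
    refine HasDerivAt.congr_deriv h ?_
    rw [hneg]; ring
  have hsin : ∀ x : ℝ, HasDerivAt (fun x => Real.sin (2 * x)) (2 * Real.cos (2 * x)) x := by
    intro x
    have := ((hasDerivAt_id x).const_mul 2).sin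
    refine HasDerivAt.congr_deriv this ?_
    simp only [id]; ring
  have hcos : ∀ x : ℝ, HasDerivAt (fun x => Real.cos (2 * x)) (-2 * Real.sin (2 * x)) x := by
    intro x
    have := ((hasDerivAt_id x).const_mul 2).cos
    refine HasDerivAt.congr_deriv this ?_
    simp only [id]; ring
  set G : ℝ → ℝ := fun x => 4 * S x + (π ^ 2 / 8 - π * x / 4) with hGdef
  set G1 : ℝ → ℝ := fun x => 4 * S1 x - π / 4 with hG1def
  have hA : ∀ x, HasDerivAt (fun x => 2 * (G x * Real.sin (2 * x)) + G1 x * Real.cos (2 * x))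
      (4 * (G x - g x) * Real.cos (2 * x)) x := by
    intro x
    have := (((hG x).mul (hsin x)).const_mul 2).add ((hG1 x).mul (hcos x))
    refine HasDerivAt.congr_deriv this ?_
    simp only [hG1def]
    ring
  have hB : ∀ x, HasDerivAt (fun x => 2 * (G x * Real.cos (2 * x)) - G1 x * Real.sin (2 * x))
      (-4 * (G x - g x) * Real.sin (2 * x)) x := by
    intro x
    have := (((hG x).mul (hcos x)).const_mul 2).sub ((hG1 x).mul (hsin x))
    refine HasDerivAt.congr_deriv this ?_
    simp only [hG1def]
    ring
  have cA := constant_of_has_deriv_right_zero (a := 0) (b := π)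
    (fun x _ => (hA x).continuousAt.continuousWithinAt) (fun x hx => by
      have h := (hA x).hasDerivWithinAt (s := Ici x)
      rwa [hgS x ⟨hx.1, hx.2.le⟩, sub_self, mul_zero, zero_mul] at h)
  have cB := constant_of_has_deriv_right_zero (a := 0) (b := π)
    (fun x _ => (hB x).continuousAt.continuousWithinAt) (fun x hx => by
      have h := (hB x).hasDerivWithinAt (s := Ici x)
      rwa [hgS x ⟨hx.1, hx.2.le⟩, sub_self, mul_zero, zero_mul] at h)
  have hG10 : G1 0 = -(π / 4) := by simp [hG1def, hS1]
  have hp := Real.pi_pos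
  have hmid : π / 2 ∈ Icc 0 π := ⟨by linarith, by linarith⟩
  have hGm : G (π / 2) = 0 := by
    have hh := hgS _ hmid
    change G (π / 2) = 0
    rw [show G (π / 2) = g (π / 2) from hh.symm]
    simp only [hg]
    refine (tsum_congr fun j => ?_).trans tsum_zero
    have : wq j * (π / 2) = (j : ℕ) * π + π / 2 := by unfold wq; ring
    rw [this, Real.cos_add_pi_div_two, Real.sin_nat_mul_pi]
    simp
  have a := cA x hx
  have b := cB x hx
  have bm := cB _ hmid
  rw [show 2 * (π / 2) = π by ring, hGm] at bm
  simp only [mul_zero, Real.sin_zero, Real.cos_zero, hG10, Real.sin_pi, zero_mul, mul_one] at a b bm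
  change g x = _
  rw [hgS x hx]
  have e := Real.sin_sq_add_cos_sq (2 * x)
  have b' : 2 * (G x * Real.cos (2 * x)) - G1 x * Real.sin (2 * x) = 0 := by linarith
  change G x = _
  linear_combination (Real.sin (2 * x) / 2) * a + (Real.cos (2 * x) / 2) * b' - G x * e

/-- The series defining `Ψ₁₀` converges, `Ψ₁₀` is `C²` on `[0,π]`,
has vanishing derivative at the endpoints, is orthogonal to `cos(2x)` on `(0,π)`, and
solves `Ψ₁₀'' + 4Ψ₁₀ + 2 sin(2x) = 0` on `(0,π)`. -/
theorem Psi10_properties :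
    (∀ x : ℝ, Summable (fun j : ℕ => Real.cos ((2 * (j:ℝ) + 1) * x) / ((2 * (j:ℝ) + 1)^2 - 4)^2)) ∧
    ContDiffOn ℝ 2 Psi10 (Set.Icc 0 π) ∧
    deriv Psi10 0 = 0 ∧ deriv Psi10 π = 0 ∧
    (∫ x in (0:ℝ)..π, Psi10 x * Real.cos (2*x)) = 0 ∧
    (∀ x ∈ Set.Ioo (0:ℝ) π,
      deriv (deriv Psi10) x + 4 * Psi10 x + 2 * Real.sin (2*x) = 0) := by
  obtain ⟨hs, hd1, hd2, hc⟩ := series_facts _ c2_summable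
  have hterm : ∀ (x : ℝ) (j : ℕ), Real.cos ((2 * (j:ℝ) + 1) * x) / ((2 * (j:ℝ) + 1)^2 - 4)^2
      = 1 / (wq j ^ 2 - 4) ^ 2 * Real.cos (wq j * x) := by
    intro x j
    unfold wq; ring
  have hP : Psi10 = fun x => -(16/π) * ∑' j, 1 / (wq j ^ 2 - 4) ^ 2 * Real.cos (wq j * x) := by
    funext x
    unfold Psi10
    simp_rw [hterm]
  have hP1 : ∀ x, HasDerivAt Psi10
      (-(16/π) * ∑' j, -(1 / (wq j ^ 2 - 4) ^ 2 * wq j) * Real.sin (wq j * x)) x := by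
    intro x; rw [hP]; exact (hd1 x).const_mul _
  have hD : deriv Psi10 = fun x =>
      -(16/π) * ∑' j, -(1 / (wq j ^ 2 - 4) ^ 2 * wq j) * Real.sin (wq j * x) :=
    funext fun x => (hP1 x).deriv
  have hP2 : ∀ x, HasDerivAt (deriv Psi10)
      (-(16/π) * ∑' j, -(1 / (wq j ^ 2 - 4) ^ 2 * wq j ^ 2) * Real.cos (wq j * x)) x := by
    intro x; rw [hD]; exact (hd2 x).const_mul _
  have hD2 : deriv (deriv Psi10) = fun x =>
      -(16/π) * ∑' j, -(1 / (wq j ^ 2 - 4) ^ 2 * wq j ^ 2) * Real.cos (wq j * x) :=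
    funext fun x => (hP2 x).deriv
  refine ⟨?_, ?_, ?_, ?_, ?_, ?_⟩
  · intro x
    simp_rw [hterm]
    exact hs x
  · apply ContDiff.contDiffOn
    rw [show (2 : WithTop ℕ∞) = 1 + 1 by norm_num, contDiff_succ_iff_deriv]
    refine ⟨fun x => (hP1 x).differentiableAt, by simp, ?_⟩
    rw [contDiff_one_iff_deriv]
    refine ⟨fun x => (hP2 x).differentiableAt, ?_⟩
    rw [hD2]
    exact hc.const_mul _
  · rw [hD]; simp
  · have : ∀ j : ℕ, Real.sin (wq j * π) = 0 := by
      intro j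
      have := Real.sin_nat_mul_pi (2 * j + 1)
      push_cast at this
      exact this
    rw [hD]; simp [this]
  · have hsym : ∀ x, Psi10 (π - x) = - Psi10 x := by
      intro x
      rw [hP]
      simp only
      rw [← mul_neg, ← tsum_neg]
      congr 1
      refine tsum_congr fun j => ?_
      have : Real.cos (wq j * (π - x)) = - Real.cos (wq j * x) := by
        have h : wq j * (π - x) = (π - wq j * x) + (j : ℕ) * (2 * π) := by unfold wq; ring
        rw [h, Real.cos_add_nat_mul_two_pi, Real.cos_pi_sub]
      rw [this]; ring
    have h := intervalIntegral.integral_comp_sub_left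
      (a := 0) (b := π) (fun x => Psi10 x * Real.cos (2 * x)) π
    have h2 : ∀ x, Real.cos (2 * (π - x)) = Real.cos (2 * x) := by
      intro x
      rw [show 2 * (π - x) = 2 * π - 2 * x by ring, Real.cos_two_pi_sub]
    simp only [hsym, h2, sub_self, sub_zero, neg_mul, intervalIntegral.integral_neg] at h
    linarith
  · intro x hx
    have hg := g_eq (Ioo_subset_Icc_self hx)
    have hs2 : HasSum (fun j => 1 / (wq j ^ 2 - 4) ^ 2 * Real.cos (wq j * x)) _ := (hs x).hasSum
    have hp := Real.pi_pos
    have key : ∑' j, -(1 / (wq j ^ 2 - 4) ^ 2 * wq j ^ 2) * Real.cos (wq j * x)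
        = - (∑' j, 1 / (wq j ^ 2 - 4) * Real.cos (wq j * x))
          - 4 * ∑' j, 1 / (wq j ^ 2 - 4) ^ 2 * Real.cos (wq j * x) := by
      have hsum2 : Summable (fun j => -(1 / (wq j ^ 2 - 4) ^ 2 * wq j ^ 2)
          * Real.cos (wq j * x)) := by
        refine Summable.of_norm_bounded c2_summable (fun j => ?_)
        rw [norm_mul, Real.norm_eq_abs, Real.norm_eq_abs, abs_neg, abs_mul,
          abs_of_nonneg (by positivity : 0 ≤ wq j ^ 2)]
        exact mul_le_of_le_one_right (by positivity) (Real.abs_cos_le_one _)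
      have := hsum2.hasSum.add (hs2.mul_left 4)
      have e : ∑' j, -(1 / (wq j ^ 2 - 4) * Real.cos (wq j * x)) =
          (∑' j, -(1 / (wq j ^ 2 - 4) ^ 2 * wq j ^ 2) * Real.cos (wq j * x))
          + 4 * ∑' j, 1 / (wq j ^ 2 - 4) ^ 2 * Real.cos (wq j * x) := by
        rw [← this.tsum_eq]
        refine tsum_congr fun j => ?_
        have h1 := wq_ne j
        field_simp
        ring
      rw [tsum_neg] at e
      linarith
    rw [hD2, hP]
    simp only
    rw [key, hg]
    field_simp
    ring

end
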